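/- For every non-negative integer k and every non-negative integer n, the number of (49k+5)-colour partitions of 49n+39 is divisible by 7; that is, p_{49k+5}(49n+39) ≡ 0 (mod 7). -/

import Mathlib

/-- `colouredPartitions r n` is the number of `r`-colour partitions of `n`:
multisets of pairs `(m, c)` with `m` a positive integer part and `c` one of `r`
colours, whose parts (first components, with multiplicity) sum to `n`.  Such a
multiset is encoded by its multiplicity function `f : ℕ+ × Fin r →₀ ℕ`. -/
noncomputable def colouredPartitions (r n : ℕ) : ℕ :=
  Nat.card {f : ℕ+ × Fin r →₀ ℕ // (f.sum fun x m => (x.1 : ℕ) * m) = n}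

/-!
Let `F = ∏ (1 - X ^ m)`. The argument works for every prime `p ≡ 3 (mod 4)`: if
`r + 6 p + 2 = p² m`, then `1 / F ^ r = F ^ 2 * (F ^ 6) ^ p * (1 / F ^ m) ^ p²`, and modulo `p` the
`p`-th powers are series in `X ^ p`. So an exponent with nonzero coefficient modulo `p` has the form
`a + p c + p² d`, with `a` from `F ^ 2` and `c` from `F ^ 6 = F ^ 3 * F ^ 3`. Euler's pentagonal
number theorem makes `24 a + 2` a sum of two squares, while Jacobi's identity
`F ^ 3 = ∑ (-1) ^ j (2 j + 1) X ^ (j (j + 1) / 2)` makes `8 c + 2` a sum of two squares of numbers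
`2 j + 1` prime to `p`. As `-1` is not a square modulo `p`, the prime `p` divides a sum of two
squares only if it divides both terms; hence `p ∣ 12 a + 1` implies `p² ∣ 12 a + 1`, and
`p ∤ 4 c + 1`, which together rule out `p² ∣ 12 (a + p c + p² d) + 3 p + 1`.

Jacobi's identity comes from differentiating, at `x = 1`, the `q`-binomial expansion of
`∏_{i ≤ 2 n} (q ^ n - x q ^ i)`, whose middle factor vanishes there, and letting `n → ∞`.
-/

open Finset

section QBinomial

open Polynomial

variable {R S : Type*} [CommRing R] [CommRing S]

/-- The `q`-Pochhammer symbol `(q; q)_n = (1 - q)(1 - q ^ 2) ⋯ (1 - q ^ n)`. -/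
def qPochhammer (q : R) (n : ℕ) : R := ∏ i ∈ range n, (1 - q ^ (i + 1))

/-- The Gaussian binomial coefficient `[n choose k]_q`, defined by the `q`-Pascal recursion so that
it makes sense for every element `q` of a commutative ring. -/
def gaussBinom (q : R) : ℕ → ℕ → R
  | _, 0 => 1
  | 0, _ + 1 => 0
  | n + 1, k + 1 => gaussBinom q n k + q ^ (k + 1) * gaussBinom q n (k + 1)

theorem qPochhammer_succ (q : R) (n : ℕ) :
    qPochhammer q (n + 1) = qPochhammer q n * (1 - q ^ (n + 1)) :=
  prod_range_succ _ n

@[simp]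
theorem gaussBinom_zero_right (q : R) (n : ℕ) : gaussBinom q n 0 = 1 := by
  cases n <;> rfl

theorem gaussBinom_succ_succ (q : R) (n k : ℕ) :
    gaussBinom q (n + 1) (k + 1) = gaussBinom q n k + q ^ (k + 1) * gaussBinom q n (k + 1) :=
  rfl

theorem gaussBinom_eq_zero_of_lt (q : R) {n k : ℕ} (h : n < k) : gaussBinom q n k = 0 := by
  induction n generalizing k with
  | zero => obtain ⟨k, rfl⟩ := Nat.exists_eq_add_one_of_ne_zero h.ne'; rfl
  | succ n ih =>
    obtain ⟨k, rfl⟩ := Nat.exists_eq_add_one_of_ne_zero (Nat.ne_zero_of_lt h)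
    rw [gaussBinom_succ_succ, ih (by lia), ih (by lia), mul_zero, add_zero]

@[simp]
theorem gaussBinom_self (q : R) (n : ℕ) : gaussBinom q n n = 1 := by
  induction n with
  | zero => rfl
  | succ n ih =>
    rw [gaussBinom_succ_succ, ih, gaussBinom_eq_zero_of_lt q n.lt_succ_self, mul_zero, add_zero]

theorem map_gaussBinom (f : R →+* S) (q : R) (n k : ℕ) :
    f (gaussBinom q n k) = gaussBinom (f q) n k := by
  fun_induction gaussBinom q n k with
  | case1 => simp
  | case2 => simp [gaussBinom]
  | case3 n k ih₁ ih₂ => rw [gaussBinom_succ_succ, map_add, map_mul, map_pow, ih₁, ih₂]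

theorem gaussBinom_mul_qPochhammer (q : R) (k l : ℕ) :
    gaussBinom q (k + l) k * (qPochhammer q k * qPochhammer q l) = qPochhammer q (k + l) := by
  induction k generalizing l with
  | zero => simp [qPochhammer]
  | succ k ihk =>
    induction l with
    | zero => simp [qPochhammer]
    | succ l ihl =>
      have hk := ihk (l + 1)
      rw [show k + (l + 1) = k + 1 + l by ring] at hk
      rw [← add_assoc, gaussBinom_succ_succ, qPochhammer_succ q (k + 1 + l)]
      have hk' := qPochhammer_succ q k
      have hl' := qPochhammer_succ q l
      linear_combination (1 - q ^ (k + 1)) * hk + q ^ (k + 1) * (1 - q ^ (l + 1)) * ihl +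
        gaussBinom q (k + 1 + l) k * qPochhammer q (l + 1) * hk' +
        q ^ (k + 1) * gaussBinom q (k + 1 + l) (k + 1) * qPochhammer q (k + 1) * hl'

theorem prod_add_mul_pow_eq_sum_gaussBinom (q x y : R) (m : ℕ) :
    ∏ i ∈ range m, (y + x * q ^ i) = ∑ p ∈ antidiagonal m,
      q ^ p.1.choose 2 * gaussBinom q m p.1 * x ^ p.1 * y ^ p.2 := by
  induction m generalizing x with
  | zero => simp
  | succ m ih =>
    set t : ℕ × ℕ → R := fun p ↦ q ^ p.1.choose 2 * gaussBinom q m p.1 * (x * q) ^ p.1 * y ^ p.2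
    have shift : ∏ i ∈ range m, (y + x * q ^ (i + 1)) = ∑ p ∈ antidiagonal m, t p := by
      rw [← ih]
      exact prod_congr rfl fun i _ ↦ by ring
    have mul_y : ∑ p ∈ antidiagonal m, t p * y =
        t (0, m + 1) + ∑ p ∈ antidiagonal m, t (p.1 + 1, p.2) := by
      rw [← Nat.sum_antidiagonal_succ, Nat.sum_antidiagonal_succ']
      simp [t, gaussBinom_eq_zero_of_lt, pow_succ, mul_assoc]
    rw [prod_range_succ', shift, pow_zero, mul_one, mul_add, sum_mul, mul_y,
      Nat.sum_antidiagonal_succ, sum_mul, add_assoc, ← sum_add_distrib]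
    congr 1
    · simp [t]
    · refine sum_congr rfl fun p _ ↦ ?_
      simp only [t, gaussBinom_succ_succ, Nat.choose_succ_succ' p.1 1, Nat.choose_one_right]
      ring

theorem prod_pow_sub_pow (q : R) (n : ℕ) :
    ∏ i ∈ range n, (q ^ n - q ^ i) = (-1) ^ n * q ^ n.choose 2 * qPochhammer q n := by
  have factor : ∀ i ∈ range n, q ^ n - q ^ i = -1 * q ^ i * (1 - q ^ (n - 1 - i + 1)) := by
    intro i hi
    have hn : n = i + (n - 1 - i + 1) := by have := mem_range.mp hi; lia
    nth_rw 1 [hn]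
    ring
  rw [prod_congr rfl factor, prod_mul_distrib, prod_mul_distrib, prod_const, card_range,
    prod_pow_eq_pow_sum, prod_range_reflect (fun i ↦ 1 - q ^ (i + 1)) n, sum_range_id,
    Nat.choose_two_right, qPochhammer]

theorem prod_pow_sub_pow_add (q : R) (n : ℕ) :
    ∏ i ∈ range n, (q ^ n - q ^ (n + 1 + i)) = q ^ (n * n) * qPochhammer q n := by
  have factor : ∀ i ∈ range n, q ^ n - q ^ (n + 1 + i) = q ^ n * (1 - q ^ (i + 1)) :=
    fun i _ ↦ by ring
  rw [prod_congr rfl factor, prod_mul_distrib, prod_const, card_range, pow_mul, qPochhammer]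

theorem eval_one_derivative_prod_pow_sub (q : R) (n : ℕ) :
    (derivative (∏ i ∈ range (2 * n + 1), (C (q ^ n) + -X * C q ^ i))).eval 1 =
      (-1) ^ (n + 1) * q ^ (n + n * n + n.choose 2) * qPochhammer q n ^ 2 := by
  set g : ℕ → R[X] := fun i ↦ C (q ^ n) + -X * C q ^ i
  have eval_g (i : ℕ) : (g i).eval 1 = q ^ n - q ^ i := by
    simp [g, sub_eq_add_neg]
  have middle : g n = (1 - X) * C (q ^ n) := by
    simp only [g, C_pow]; ring
  have split : ∏ i ∈ range (2 * n + 1), g i =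
      (1 - X) * (C (q ^ n) * ((∏ i ∈ range n, g i) * ∏ i ∈ range n, g (n + 1 + i))) := by
    rw [show 2 * n + 1 = n + 1 + n by ring, prod_range_add, prod_range_succ, middle]
    ring
  rw [split, derivative_mul, eval_add, eval_mul, eval_mul]
  simp only [derivative_sub, derivative_one, derivative_X, eval_sub, eval_one, eval_X, sub_self,
    zero_mul, add_zero, zero_sub, eval_neg, eval_mul, eval_C, eval_prod, eval_g, prod_pow_sub_pow,
    prod_pow_sub_pow_add]
  ring

theorem sum_antidiagonal_neg_one_pow_mul_gaussBinom (q : R) (n : ℕ) :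
    ∑ p ∈ antidiagonal (2 * n + 1), (-1) ^ p.1 * p.1 * q ^ (p.1.choose 2 + n * p.2) *
      gaussBinom q (2 * n + 1) p.1 =
      (-1) ^ (n + 1) * q ^ (n + n * n + n.choose 2) * qPochhammer q n ^ 2 := by
  rw [← eval_one_derivative_prod_pow_sub, prod_add_mul_pow_eq_sum_gaussBinom, derivative_sum,
    eval_finsetSum]
  refine sum_congr rfl fun p _ ↦ ?_
  have monomial : C q ^ p.1.choose 2 * gaussBinom (C q) (2 * n + 1) p.1 * (-X) ^ p.1 *
      C (q ^ n) ^ p.2 = C ((-1) ^ p.1 * q ^ (p.1.choose 2 + n * p.2) *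
        gaussBinom q (2 * n + 1) p.1) * X ^ p.1 := by
    rw [neg_pow (X : R[X])]
    simp only [← map_gaussBinom, map_mul, map_pow, map_neg, map_one]
    ring
  rw [monomial, derivative_C_mul_X_pow, eval_mul, eval_C, eval_pow, eval_X, one_pow]
  ring

end QBinomial

open PowerSeries

section EulerFunction

variable {R : Type*} [CommRing R]

theorem coeff_eq_of_X_pow_dvd_sub {φ ψ : R⟦X⟧} {n i : ℕ} (h : X ^ n ∣ φ - ψ) (hi : i < n) :
    coeff i φ = coeff i ψ := by
  rw [← sub_eq_zero, ← map_sub]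
  exact X_pow_dvd_iff.mp h i hi

theorem isUnit_qPochhammer_X (n : ℕ) : IsUnit (qPochhammer (X : R⟦X⟧) n) := by
  simp [isUnit_iff_constantCoeff, qPochhammer]

theorem isUnit_pentagonalSeries : IsUnit (pentagonalSeries R) := by
  have coeff_zero : coeff 0 (pentagonalSeries R) = 1 := by
    simpa [pentagonal] using coeff_pentagonalSeries_pentagonal R 0
  rw [isUnit_iff_constantCoeff, ← coeff_zero_eq_constantCoeff_apply, coeff_zero]
  exact isUnit_one

theorem X_pow_dvd_qPochhammer_sub_qPochhammer {m n : ℕ} (h : n ≤ m) :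
    X ^ (n + 1) ∣ qPochhammer (X : R⟦X⟧) m - qPochhammer X n := by
  induction m, h using Nat.le_induction with
  | base => simp
  | succ m hnm ih =>
    rw [qPochhammer_succ, mul_sub, mul_one, sub_right_comm]
    exact dvd_sub ih (dvd_mul_of_dvd_right (pow_dvd_pow X (by lia)) _)

theorem X_pow_dvd_qPochhammer_sub_pentagonalSeries {m n : ℕ} (h : n ≤ m) :
    X ^ (n + 1) ∣ qPochhammer (X : R⟦X⟧) m - pentagonalSeries R := by
  rw [X_pow_dvd_iff]
  intro i hi
  obtain ⟨N, hN, hmN⟩ := ((Filter.tendsto_finset_range.eventually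
    (coeff_prod_one_sub_X_pow_eventually_eq R i)).and (Filter.eventually_ge_atTop m)).exists
  rw [map_sub, sub_eq_zero, ← hN]
  exact (coeff_eq_of_X_pow_dvd_sub (X_pow_dvd_qPochhammer_sub_qPochhammer hmN) (by lia)).symm

theorem gaussBinom_X_add_comm (k l : ℕ) :
    gaussBinom (X : R⟦X⟧) (k + l) k = gaussBinom X (k + l) l := by
  refine ((isUnit_qPochhammer_X k).mul (isUnit_qPochhammer_X l)).mul_right_cancel ?_
  have symm := gaussBinom_mul_qPochhammer (X : R⟦X⟧) l k
  rw [add_comm l k, mul_comm (qPochhammer X l)] at symm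
  rw [gaussBinom_mul_qPochhammer, symm]

theorem X_pow_dvd_gaussBinom_mul_pentagonalSeries_sub_one {n k l : ℕ} (hk : n ≤ k) (hl : n ≤ l) :
    X ^ (n + 1) ∣ gaussBinom (X : R⟦X⟧) (k + l) k * pentagonalSeries R - 1 := by
  obtain ⟨a, ha⟩ := X_pow_dvd_qPochhammer_sub_pentagonalSeries (R := R) hk
  obtain ⟨b, hb⟩ := X_pow_dvd_qPochhammer_sub_pentagonalSeries (R := R) hl
  obtain ⟨c, hc⟩ := X_pow_dvd_qPochhammer_sub_pentagonalSeries (R := R)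
    (hk.trans (Nat.le_add_right k l))
  have product := gaussBinom_mul_qPochhammer (X : R⟦X⟧) k l
  rw [← isUnit_pentagonalSeries.dvd_mul_right]
  refine ⟨c - gaussBinom X (k + l) k * (a * qPochhammer X l + pentagonalSeries R * b), ?_⟩
  linear_combination hc + product -
    gaussBinom X (k + l) k * (qPochhammer X l * ha + pentagonalSeries R * hb)

end EulerFunction

section JacobiIdentity

variable {R : Type*} [CommRing R]

theorem sum_antidiagonal_two_mul_add_one {M : Type*} [AddCommMonoid M] (f : ℕ × ℕ → M) (n : ℕ) :
    ∑ p ∈ antidiagonal (2 * n + 1), f p =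
      ∑ p ∈ antidiagonal n, (f (p.2, n + 1 + p.1) + f (n + 1 + p.1, p.2)) := by
  simp only [Nat.sum_antidiagonal_eq_sum_range_succ_mk, Nat.succ_eq_add_one]
  rw [show 2 * n + 1 + 1 = n + 1 + (n + 1) by ring, sum_range_add, ← sum_range_reflect,
    ← sum_add_distrib]
  refine sum_congr rfl fun j hj ↦ ?_
  have := mem_range.mp hj
  congr 3 <;> lia

theorem qPochhammer_X_sq (n : ℕ) :
    qPochhammer (X : R⟦X⟧) n ^ 2 = ∑ p ∈ antidiagonal n,
      ((-1) ^ p.1 * (2 * p.1 + 1) : R⟦X⟧) * X ^ (p.1 + 1).choose 2 *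
        gaussBinom X (2 * n + 1) p.2 := by
  set N := n + n * n + n.choose 2 with hN
  refine X_pow_mul_cancel (k := N) ((isUnit_one.neg.pow (n + 1)).mul_left_cancel ?_)
  rw [← mul_assoc, ← sum_antidiagonal_neg_one_pow_mul_gaussBinom,
    sum_antidiagonal_two_mul_add_one, mul_sum, mul_sum]
  refine sum_congr rfl fun ⟨j, i⟩ hp ↦ ?_
  obtain rfl : j + i = n := mem_antidiagonal.mp hp
  have exponent_low : i.choose 2 + (j + i) * (j + i + 1 + j) = N + (j + 1).choose 2 := by
    qify
    simp only [hN, Nat.cast_add, Nat.cast_choose_two]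
    push_cast
    ring
  have exponent_high : (j + i + 1 + j).choose 2 + (j + i) * i = N + (j + 1).choose 2 := by
    qify
    simp only [hN, Nat.cast_add, Nat.cast_choose_two]
    push_cast
    ring
  have symm := gaussBinom_X_add_comm (R := R) i (j + i + 1 + j)
  rw [show i + (j + i + 1 + j) = 2 * (j + i) + 1 by ring] at symm
  have sign : ((-1) ^ i : R⟦X⟧) = (-1) ^ (j + i) * (-1) ^ j := by
    rw [add_comm, pow_add, mul_assoc, ← mul_pow, neg_one_mul, neg_neg, one_pow, mul_one]
  simp only [exponent_low, exponent_high, ← symm, sign]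
  push_cast
  ring

theorem X_pow_dvd_pentagonalSeries_pow_three_sub (n : ℕ) :
    X ^ (n + 1) ∣ pentagonalSeries R ^ 3 -
      ∑ j ∈ range (n + 1), ((-1) ^ j * (2 * j + 1) : R⟦X⟧) * X ^ (j + 1).choose 2 := by
  set F := pentagonalSeries R
  set c : ℕ → R⟦X⟧ := fun j ↦ (-1) ^ j * (2 * j + 1)
  have cube : F ^ 3 - ∑ j ∈ range (n + 1), c j * X ^ (j + 1).choose 2 =
      ∑ p ∈ antidiagonal n,
        c p.1 * (X ^ (p.1 + 1).choose 2 * (gaussBinom X (2 * n + 1) p.2 * F - 1)) -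
      F * (qPochhammer X n + F) * (qPochhammer X n - F) := by
    have finite := qPochhammer_X_sq (R := R) n
    have reindex := Nat.sum_antidiagonal_eq_sum_range_succ_mk
      (fun p ↦ c p.1 * X ^ (p.1 + 1).choose 2) n
    simp only [mul_sub, mul_one, sum_sub_distrib, ← mul_assoc, ← sum_mul, ← finite, reindex, c]
    ring
  rw [cube]
  refine dvd_sub (dvd_sum fun ⟨j, i⟩ hp ↦ dvd_mul_of_dvd_right ?_ _)
    (dvd_mul_of_dvd_right (X_pow_dvd_qPochhammer_sub_pentagonalSeries le_rfl) _)
  obtain rfl : j + i = n := mem_antidiagonal.mp hp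
  have binomial : X ^ (i + 1) ∣ gaussBinom X (2 * (j + i) + 1) i * F - 1 := by
    rw [show 2 * (j + i) + 1 = i + (i + 2 * j + 1) by ring]
    exact X_pow_dvd_gaussBinom_mul_pentagonalSeries_sub_one le_rfl (by lia)
  have exponent : j + i + 1 ≤ (j + 1).choose 2 + (i + 1) := by
    rw [Nat.choose_succ_succ' j 1, Nat.choose_one_right]
    lia
  refine (pow_dvd_pow X exponent).trans ?_
  rw [pow_add]
  exact mul_dvd_mul_left _ binomial

theorem coeff_pentagonalSeries_pow_three (n : ℕ) :
    coeff n (pentagonalSeries R ^ 3) =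
      ∑ j ∈ range (n + 1), if n = (j + 1).choose 2 then ((-1) ^ j * (2 * j + 1) : R) else 0 := by
  rw [coeff_eq_of_X_pow_dvd_sub (X_pow_dvd_pentagonalSeries_pow_three_sub n) n.lt_succ_self,
    map_sum]
  refine sum_congr rfl fun j _ ↦ ?_
  have constant : ((-1) ^ j * (2 * j + 1) : R⟦X⟧) = C ((-1) ^ j * (2 * j + 1) : R) := by
    simp only [map_mul, map_add, map_pow, map_neg, map_one, map_natCast, map_ofNat]
  rw [constant, coeff_C_mul, coeff_X_pow, mul_ite, mul_one, mul_zero]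

end JacobiIdentity

section GeneratingFunction

variable {R : Type*} [CommRing R]

theorem image_smul_setOf_weight_eq {ι : Type*} [DecidableEq ι] {w : ι → ℕ} (hw : ∀ i, w i ≠ 0)
    (s : Finset ι) (n : ℕ) :
    (w • ·) '' {f : ι →₀ ℕ | f.support ⊆ s ∧ Finsupp.weight w f = n} =
      {l | l ∈ finsuppAntidiag s n ∧ ∀ i ∈ s, w i ∣ l i} := by
  have support_smul (f : ι →₀ ℕ) : (w • f).support = f.support := by
    ext i
    simp [hw i]
  have weight_eq {f : ι →₀ ℕ} (hf : f.support ⊆ s) : Finsupp.weight w f = s.sum (w • f) := by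
    rw [Finsupp.weight_apply, Finsupp.sum_of_support_subset f hf _ (by simp)]
    exact sum_congr rfl fun i _ ↦ by simp [mul_comm]
  ext l
  simp only [mem_finsuppAntidiag, Set.mem_image, Set.mem_ofPred_eq]
  constructor
  · rintro ⟨f, ⟨hf, hn⟩, rfl⟩
    exact ⟨⟨(weight_eq hf).symm.trans hn, support_smul f ▸ hf⟩, fun i _ ↦ ⟨f i, by simp⟩⟩
  · rintro ⟨⟨hsum, hsupp⟩, hdvd⟩
    let f : ι →₀ ℕ := Finsupp.onFinset s (fun i ↦ l i / w i) fun i hi ↦ hsupp <|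
      Finsupp.mem_support_iff.mpr fun hl ↦ hi (by rw [hl, Nat.zero_div])
    have hf : w • f = l := by
      ext i
      by_cases hi : i ∈ s
      · exact Nat.mul_div_cancel' (hdvd i hi)
      · have hl : l i = 0 := Finsupp.notMem_support_iff.mp fun h ↦ hi (hsupp h)
        simp [f, hl]
    have hfs : f.support ⊆ s := support_smul f ▸ hf ▸ hsupp
    exact ⟨f, ⟨hfs, by rw [weight_eq hfs, hf, hsum]⟩, hf⟩

theorem coeff_prod_expand_mk_one {ι : Type*} (w : ι → ℕ) (hw : ∀ i, w i ≠ 0) (s : Finset ι)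
    (n : ℕ) :
    coeff n (∏ i ∈ s, expand (w i) (hw i) (PowerSeries.mk 1 : R⟦X⟧)) =
      Nat.card {f : ι →₀ ℕ // f.support ⊆ s ∧ Finsupp.weight w f = n} := by
  classical
  have smul_injective : Function.Injective fun f : ι →₀ ℕ ↦ w • f := fun f g h ↦ by
    ext i
    simpa [hw i] using DFunLike.congr_fun h i
  simp only [coeff_prod, coeff_expand, coeff_mk, Pi.one_apply, prod_ite_zero, prod_const_one,
    sum_boole]
  rw [← Set.ncard_coe_finset, coe_filter, ← image_smul_setOf_weight_eq hw,
    Set.ncard_image_of_injective _ smul_injective]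
  rfl

theorem prod_expand_mk_one_mul_prod_one_sub {ι : Type*} (w : ι → ℕ) (hw : ∀ i, w i ≠ 0)
    (s : Finset ι) :
    (∏ i ∈ s, expand (w i) (hw i) (PowerSeries.mk 1 : R⟦X⟧)) * ∏ i ∈ s, (1 - X ^ w i) = 1 := by
  rw [← prod_mul_distrib]
  refine prod_eq_one fun i _ ↦ ?_
  rw [← expand_X (w i) (hw i), ← map_one (expand (w i) (hw i)), ← map_sub, ← map_mul,
    mk_one_mul_one_sub_eq_one]

/-- The generating function `∑ p_r(n) X ^ n` of the `r`-colour partition numbers, with coefficients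
read in a semiring `R`. -/
noncomputable def colouredPartitionSeries (R : Type*) [Semiring R] (r : ℕ) : R⟦X⟧ :=
  PowerSeries.mk fun n ↦ (colouredPartitions r n : R)

theorem colouredPartitions_eq_card_weight (r : ℕ) {n N : ℕ} (h : n ≤ N) :
    colouredPartitions r n = Nat.card {f : ℕ+ × Fin r →₀ ℕ //
      f.support ⊆ (range N).map ⟨Nat.succPNat, Nat.succPNat_injective⟩ ×ˢ univ ∧
        Finsupp.weight (fun x : ℕ+ × Fin r ↦ (x.1 : ℕ)) f = n} := by
  refine Nat.card_congr (Equiv.subtypeEquivRight fun f ↦ ?_)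
  have weight_eq : f.sum (fun x m ↦ (x.1 : ℕ) * m) =
      Finsupp.weight (fun x : ℕ+ × Fin r ↦ (x.1 : ℕ)) f := by
    simp only [Finsupp.weight_apply, smul_eq_mul, mul_comm]
  rw [weight_eq, iff_and_self]
  rintro rfl x hx
  have part_le : (x.1 : ℕ) ≤ N := (Finsupp.le_weight_of_ne_zero'
    (fun x : ℕ+ × Fin r ↦ (x.1 : ℕ)) (Finsupp.mem_support_iff.mp hx)).trans h
  have natPred_lt : x.1.natPred < N := x.1.natPred_add_one.trans_le part_le
  exact mem_product.mpr ⟨mem_map.mpr ⟨_, mem_range.mpr natPred_lt, x.1.succPNat_natPred⟩,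
    mem_univ _⟩

theorem prod_one_sub_X_pow_eq_qPochhammer_pow (r n : ℕ) :
    ∏ x ∈ (range n).map ⟨Nat.succPNat, Nat.succPNat_injective⟩ ×ˢ (univ : Finset (Fin r)),
      (1 - X ^ (x.1 : ℕ) : R⟦X⟧) = qPochhammer X n ^ r := by
  simp [prod_product, prod_map, qPochhammer, prod_pow]

theorem colouredPartitionSeries_mul_pentagonalSeries_pow (r : ℕ) :
    colouredPartitionSeries R r * pentagonalSeries R ^ r = 1 := by
  suffices ∀ n, X ^ (n + 1) ∣ colouredPartitionSeries R r * pentagonalSeries R ^ r - 1 by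
    ext n
    exact coeff_eq_of_X_pow_dvd_sub (this n) n.lt_succ_self
  intro n
  set s := (range n).map ⟨Nat.succPNat, Nat.succPNat_injective⟩ ×ˢ (univ : Finset (Fin r))
  set w : ℕ+ × Fin r → ℕ := fun x ↦ x.1
  have hw (x : ℕ+ × Fin r) : w x ≠ 0 := x.1.ne_zero
  set G := ∏ x ∈ s, expand (w x) (hw x) (PowerSeries.mk 1 : R⟦X⟧)
  set Q := qPochhammer (X : R⟦X⟧) n
  have inverse : G * Q ^ r = 1 := by
    rw [← prod_one_sub_X_pow_eq_qPochhammer_pow]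
    exact prod_expand_mk_one_mul_prod_one_sub w hw s
  have truncate : X ^ (n + 1) ∣ colouredPartitionSeries R r - G := by
    refine X_pow_dvd_iff.mpr fun i hi ↦ ?_
    rw [map_sub, sub_eq_zero, colouredPartitionSeries, coeff_mk, coeff_prod_expand_mk_one,
      colouredPartitions_eq_card_weight r (Nat.lt_succ_iff.mp hi)]
  have euler : X ^ (n + 1) ∣ Q ^ r - pentagonalSeries R ^ r :=
    (X_pow_dvd_qPochhammer_sub_pentagonalSeries le_rfl).trans (sub_dvd_pow_sub_pow _ _ r)
  have decomposition : colouredPartitionSeries R r * pentagonalSeries R ^ r - 1 =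
      (colouredPartitionSeries R r - G) * pentagonalSeries R ^ r -
        G * (Q ^ r - pentagonalSeries R ^ r) := by
    linear_combination inverse
  rw [decomposition]
  exact dvd_sub (dvd_mul_of_dvd_left truncate _) (dvd_mul_of_dvd_right euler _)

end GeneratingFunction

section Congruence

theorem exists_coeff_ne_zero_of_coeff_mul_ne_zero {R : Type*} [Semiring R] {φ ψ : R⟦X⟧} {e : ℕ}
    (h : coeff e (φ * ψ) ≠ 0) : ∃ a b, a + b = e ∧ coeff a φ ≠ 0 ∧ coeff b ψ ≠ 0 := by
  rw [coeff_mul] at h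
  obtain ⟨⟨a, b⟩, hab, hne⟩ := exists_ne_zero_of_sum_ne_zero h
  exact ⟨a, b, mem_antidiagonal.mp hab, left_ne_zero_of_mul hne, right_ne_zero_of_mul hne⟩

theorem exists_sq_of_coeff_pentagonalSeries_ne_zero {R : Type*} [CommRing R] {e : ℕ}
    (h : coeff e (pentagonalSeries R) ≠ 0) : ∃ x : ℤ, 24 * (e : ℤ) + 1 = x ^ 2 := by
  obtain ⟨k, rfl⟩ := not_imp_comm.mp (coeff_pentagonalSeries_eq_zero R) h
  exact ⟨6 * k - 1, by linear_combination 12 * two_mul_natCast_pentagonal k⟩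

theorem exists_sq_of_coeff_pentagonalSeries_pow_three_ne_zero {R : Type*} [CommRing R] {e : ℕ}
    (h : coeff e (pentagonalSeries R ^ 3) ≠ 0) :
    ∃ x : ℤ, 8 * (e : ℤ) + 1 = x ^ 2 ∧ (x : R) ≠ 0 := by
  rw [coeff_pentagonalSeries_pow_three] at h
  obtain ⟨j, -, hj⟩ := exists_ne_zero_of_sum_ne_zero h
  obtain ⟨rfl, hne⟩ := ite_ne_right_iff.mp hj
  have triangle : ((j + 1).choose 2 * 2 : ℤ) = j * (j + 1) := by
    have h := Nat.add_one_mul_choose_eq j 1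
    rw [Nat.choose_one_right, mul_comm] at h
    exact_mod_cast h.symm
  exact ⟨2 * j + 1, by linear_combination 4 * triangle,
    by simpa using right_ne_zero_of_mul hne⟩

variable {p : ℕ} [Fact p.Prime]

theorem dvd_and_dvd_of_dvd_sq_add_sq (hp : p % 4 = 3) {x y : ℤ} (h : (p : ℤ) ∣ x ^ 2 + y ^ 2) :
    (p : ℤ) ∣ x ∧ (p : ℤ) ∣ y := by
  simp only [← ZMod.intCast_zmod_eq_zero_iff_dvd] at h ⊢
  push_cast at h
  have hy : (y : ZMod p) = 0 := by
    by_contra hy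
    exact ZMod.mod_four_ne_three_of_sq_eq_neg_sq' hy (eq_neg_of_add_eq_zero_left h) hp
  exact ⟨by simpa [hy] using h, hy⟩

theorem sq_dvd_of_coeff_pentagonalSeries_sq_ne_zero {R : Type*} [CommRing R] (hp : p % 4 = 3)
    {e : ℕ} (h : coeff e (pentagonalSeries R ^ 2) ≠ 0) (he : p ∣ 12 * e + 1) :
    p ^ 2 ∣ 12 * e + 1 := by
  rw [sq] at h
  obtain ⟨a, b, rfl, ha, hb⟩ := exists_coeff_ne_zero_of_coeff_mul_ne_zero h
  obtain ⟨x, hx⟩ := exists_sq_of_coeff_pentagonalSeries_ne_zero ha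
  obtain ⟨y, hy⟩ := exists_sq_of_coeff_pentagonalSeries_ne_zero hb
  have norm_eq : x ^ 2 + y ^ 2 = (2 * (12 * (a + b) + 1) : ℕ) := by
    push_cast
    linear_combination -hx - hy
  obtain ⟨px, py⟩ := dvd_and_dvd_of_dvd_sq_add_sq hp (x := x) (y := y)
    (norm_eq ▸ Int.natCast_dvd_natCast.mpr (dvd_mul_of_dvd_right he 2))
  have sq_dvd : p ^ 2 ∣ 2 * (12 * (a + b) + 1) := by
    rw [← Int.natCast_dvd_natCast, ← norm_eq, Nat.cast_pow]
    exact dvd_add (pow_dvd_pow_of_dvd px 2) (pow_dvd_pow_of_dvd py 2)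
  have odd_p : Odd p := Nat.odd_iff.mpr (by lia)
  exact (odd_p.coprime_two_right.pow_left 2).dvd_of_dvd_mul_left sq_dvd

theorem coeff_pentagonalSeries_pow_six_eq_zero (hp : p % 4 = 3) {e : ℕ} (he : p ∣ 4 * e + 1) :
    coeff e (pentagonalSeries (ZMod p) ^ 6) = 0 := by
  by_contra h
  rw [show 6 = 3 + 3 by rfl, pow_add] at h
  obtain ⟨a, b, rfl, ha, hb⟩ := exists_coeff_ne_zero_of_coeff_mul_ne_zero h
  obtain ⟨x, hx, hx0⟩ := exists_sq_of_coeff_pentagonalSeries_pow_three_ne_zero ha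
  obtain ⟨y, hy, -⟩ := exists_sq_of_coeff_pentagonalSeries_pow_three_ne_zero hb
  have norm_eq : x ^ 2 + y ^ 2 = (2 * (4 * (a + b) + 1) : ℕ) := by
    push_cast
    linear_combination -hx - hy
  have px : (p : ℤ) ∣ x := (dvd_and_dvd_of_dvd_sq_add_sq hp
    (norm_eq ▸ Int.natCast_dvd_natCast.mpr (dvd_mul_of_dvd_right he 2))).1
  exact hx0 ((ZMod.intCast_zmod_eq_zero_iff_dvd x p).mpr px)

theorem pow_prime_eq_expand (φ : (ZMod p)⟦X⟧) : φ ^ p = expand p (NeZero.ne p) φ := by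
  have h := MvPowerSeries.map_frobenius_expand p (NeZero.ne p) (f := φ)
  rw [ZMod.frobenius_zmod, MvPowerSeries.map_id] at h
  exact h.symm

theorem exists_eq_mul_of_coeff_pow_prime_ne_zero {φ : (ZMod p)⟦X⟧} {e : ℕ}
    (h : coeff e (φ ^ p) ≠ 0) : ∃ c, e = p * c ∧ coeff c φ ≠ 0 := by
  rw [pow_prime_eq_expand] at h
  obtain ⟨c, rfl⟩ := not_imp_comm.mp (coeff_expand_of_not_dvd p (NeZero.ne p) φ) h
  exact ⟨c, rfl, by rwa [coeff_expand_mul] at h⟩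

theorem colouredPartitionSeries_eq_of_add_eq {r m : ℕ} (h : r + 6 * p + 2 = p ^ 2 * m) :
    colouredPartitionSeries (ZMod p) r = pentagonalSeries (ZMod p) ^ 2 *
      (pentagonalSeries (ZMod p) ^ 6 * colouredPartitionSeries (ZMod p) m ^ p) ^ p := by
  refine (isUnit_pentagonalSeries.pow r).mul_right_cancel ?_
  rw [colouredPartitionSeries_mul_pentagonalSeries_pow]
  calc
    (1 : (ZMod p)⟦X⟧) =
        (colouredPartitionSeries (ZMod p) m * pentagonalSeries (ZMod p) ^ m) ^ p ^ 2 := by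
      rw [colouredPartitionSeries_mul_pentagonalSeries_pow, one_pow]
    _ = colouredPartitionSeries (ZMod p) m ^ p ^ 2 * pentagonalSeries (ZMod p) ^ (p ^ 2 * m) := by
      ring
    _ = _ := by
      rw [← h]
      ring

end Congruence

theorem colouredPartitions_cong_mod7_49k5_general {p : ℕ} [Fact p.Prime] (hp : p % 4 = 3)
    {r e : ℕ} (hr : p ^ 2 ∣ r + 6 * p + 2) (he : p ^ 2 ∣ 12 * e + 3 * p + 1) :
    p ∣ colouredPartitions r e := by
  obtain ⟨m, hm⟩ := hr
  rw [← ZMod.natCast_eq_zero_iff]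
  by_contra hne
  have coeff_ne : coeff e (colouredPartitionSeries (ZMod p) r) ≠ 0 := by
    rwa [colouredPartitionSeries, coeff_mk]
  rw [colouredPartitionSeries_eq_of_add_eq hm] at coeff_ne
  obtain ⟨a, b, rfl, ha, hb⟩ := exists_coeff_ne_zero_of_coeff_mul_ne_zero coeff_ne
  obtain ⟨b, rfl, hcd⟩ := exists_eq_mul_of_coeff_pow_prime_ne_zero hb
  obtain ⟨c, d, rfl, hc, hd⟩ := exists_coeff_ne_zero_of_coeff_mul_ne_zero hcd
  obtain ⟨d, rfl, -⟩ := exists_eq_mul_of_coeff_pow_prime_ne_zero hd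
  have split : 12 * (a + p * (c + p * d)) + 3 * p + 1 =
      12 * a + 1 + p * (3 * (4 * c + 1) + p * (12 * d)) := by ring
  rw [split] at he
  have dvd_a : p ∣ 12 * a + 1 :=
    (Nat.dvd_add_left (dvd_mul_right _ _)).mp ((dvd_pow_self p two_ne_zero).trans he)
  have sq_dvd_a := sq_dvd_of_coeff_pentagonalSeries_sq_ne_zero hp ha dvd_a
  have dvd_mul_c : p ∣ 3 * (4 * c + 1) := by
    rw [Nat.dvd_add_right sq_dvd_a, sq] at he
    exact (Nat.dvd_add_left (dvd_mul_right _ _)).mp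
      (Nat.dvd_of_mul_dvd_mul_left (NeZero.pos p) he)
  have coprime_three : p.Coprime 3 :=
    Nat.Coprime.of_dvd_left dvd_a (by simp [show 12 * a + 1 = 1 + 3 * (4 * a) by ring])
  exact hc (coeff_pentagonalSeries_pow_six_eq_zero hp (coprime_three.dvd_of_dvd_mul_left dvd_mul_c))

theorem colouredPartitions_cong_mod7_49k5 (k n : ℕ) :
    7 ∣ colouredPartitions (49 * k + 5) (49 * n + 39) :=
  haveI : Fact (Nat.Prime 7) := ⟨by norm_num⟩
  colouredPartitions_cong_mod7_49k5_general rfl ⟨k + 1, by ring⟩ ⟨12 * n + 10, by ring⟩
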